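/- There exists a finite alphabet Σ and a language L ⊆ Σ* such that L is generated by an admissible signed grammar over Σ but L is not a context-free language. -/

import Mathlib

/-- A parse-tree node: either a terminal leaf or an internal node labeled by a
nonterminal with a list of children. -/
inductive PTree (N : Type) (T : Type) : Type where
  | leaf (t : T) : PTree N T
  | node (A : N) (children : List (PTree N T)) : PTree N T

namespace PTree

variable {N T : Type}

/-- The symbol (nonterminal or terminal) labeling the root of a tree. -/
def toSymbol : PTree N T → N ⊕ T
  | leaf t => Sum.inr t
  | node A _ => Sum.inl A

/-- The yield of a parse tree: the word spelled by its leaves. -/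
def yield : PTree N T → List T
  | leaf t => [t]
  | node _ cs => cs.attach.flatMap (fun c => yield c.1)
decreasing_by simp only [PTree.node.sizeOf_spec]; have h := List.sizeOf_lt_of_mem c.2; omega

/-- The sign of a parse tree w.r.t. a sign assignment on productions:
the product of the signs of the productions used at its nodes. -/
def sign (σ : N × List (N ⊕ T) → ℤ) : PTree N T → ℤ
  | leaf _ => 1
  | node A cs => σ (A, cs.map toSymbol) * (cs.attach.map (fun c => sign σ c.1)).prod
decreasing_by simp only [PTree.node.sizeOf_spec]; have h := List.sizeOf_lt_of_mem c.2; omega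

/-- Validity of a parse tree w.r.t. a set of productions: at every internal node,
the node label together with the list of symbols of its children is a production. -/
inductive Valid (R : Set (N × List (N ⊕ T))) : PTree N T → Prop where
  | leaf (t : T) : Valid R (PTree.leaf t)
  | node (A : N) (cs : List (PTree N T)) :
      (A, cs.map toSymbol) ∈ R → (∀ c ∈ cs, Valid R c) → Valid R (PTree.node A cs)

end PTree

/-- A signed grammar over a (finite) terminal alphabet `T`: a context-free grammar
with finitely many nonterminals and productions, together with a sign `1` or `-1`
attached to each production. -/
structure SignedGrammar (T : Type) : Type 1 where
  /-- the type of nonterminals -/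
  N : Type
  finN : Finite N
  /-- the start symbol -/
  start : N
  /-- the productions `A → α`, `α ∈ (N ∪ T)*` -/
  rules : Set (N × List (N ⊕ T))
  finRules : rules.Finite
  /-- the sign of each production -/
  sign : N × List (N ⊕ T) → ℤ
  sign_valid : ∀ r ∈ rules, sign r = 1 ∨ sign r = -1

namespace SignedGrammar

variable {T : Type}

/-- A parse tree over the grammar: a valid tree whose root is labeled by the start symbol. -/
def IsParseTree (G : SignedGrammar T) (t : PTree G.N T) : Prop :=
  PTree.Valid G.rules t ∧ t.toSymbol = Sum.inl G.start

/-- The set of parse trees over `G` with yield `w`. -/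
def parseTreesOf (G : SignedGrammar T) (w : List T) : Set (PTree G.N T) :=
  {t | G.IsParseTree t ∧ t.yield = w}

/-- `G` is admissible if every word has only finitely many parse trees. -/
def Admissible (G : SignedGrammar T) : Prop :=
  ∀ w : List T, (G.parseTreesOf w).Finite

/-- `n_w(G)`: the sum of the signs of all parse trees over `G` with yield `w`. -/
noncomputable def count (G : SignedGrammar T) (w : List T) : ℤ :=
  ∑ᶠ t ∈ G.parseTreesOf w, t.sign G.sign

/-- `G` generates the language `L` if `G` is admissible, `n_w(G) = 1` for every
`w ∈ L` and `n_w(G) = 0` for every `w ∉ L`. -/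
def Generates (G : SignedGrammar T) (L : Language T) : Prop :=
  G.Admissible ∧ (∀ w ∈ L, G.count w = 1) ∧ (∀ w ∉ L, G.count w = 0)

/-- An ordinary context-free grammar: every production has sign `+1`. -/
def Ordinary (G : SignedGrammar T) : Prop :=
  ∀ r ∈ G.rules, G.sign r = 1

/-- The language generated by `G` in the usual sense: all yields of parse trees. -/
def language (G : SignedGrammar T) : Language T :=
  {w | ∃ t : PTree G.N T, G.IsParseTree t ∧ t.yield = w}

/-- `G` is unambiguous if every word has at most one parse tree. -/
def Unambiguous (G : SignedGrammar T) : Prop :=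
  ∀ t₁ t₂ : PTree G.N T, G.IsParseTree t₁ → G.IsParseTree t₂ →
    t₁.yield = t₂.yield → t₁ = t₂

/-- The number of parse trees of `G` with yield `w` (degree of ambiguity of `w`). -/
noncomputable def ambCount (G : SignedGrammar T) (w : List T) : ℕ :=
  Nat.card {t : PTree G.N T // t ∈ G.parseTreesOf w}

end SignedGrammar

/-!
Each of the conditions `i ≥ j`, `j ≥ k`, `i ≥ k` on the words `aⁱbʲcᵏ` is recognized by an
unambiguous grammar with nested brackets. The disjoint union of the three grammars with signs `+`,
`+`, `-` gives `aⁱbʲcᵏ` the count `[i ≥ j] + [j ≥ k] - [i ≥ k]`, which is always `0` or `1`: it is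
`1` iff `i ≥ j ≥ k` or `j ≤ i < k` or `i < k ≤ j`.

The words with count `1` do not form a context-free language. Mark the letters `c` in `aⁱbʲcᵏ` with
`i = j + 1` and `k` much smaller. By Ogden's lemma letters `c` can be pumped, together with at most
one other kind of letter since the pumped words must stay sorted. If `b` is not pumped, pump until
the number of `c`s is the original `i`, which gives `j < k ≤ i`. If `b` is pumped, then `a` is not,
and two rounds of pumping give `k ≤ i < j`. The count is `0` in both cases.
-/

namespace PTree

variable {N T : Type}

theorem yield_leaf (a : T) : (leaf a : PTree N T).yield = [a] := by
  rw [yield]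

theorem yield_node (A : N) (cs : List (PTree N T)) : (node A cs).yield = cs.flatMap yield := by
  rw [yield, List.flatMap_subtype fun _ _ => rfl, List.unattach_attach]

theorem sign_leaf (σ : N × List (N ⊕ T) → ℤ) (a : T) : (leaf a).sign σ = 1 := by
  rw [sign]

theorem sign_node (σ : N × List (N ⊕ T) → ℤ) (A : N) (cs : List (PTree N T)) :
    (node A cs).sign σ = σ (A, cs.map toSymbol) * (cs.map (sign σ)).prod := by
  rw [sign, List.map_subtype fun _ _ => rfl, List.unattach_attach]

theorem map_toSymbol_map_leaf (l : List T) :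
    (l.map leaf).map (toSymbol (N := N)) = l.map Sum.inr := by
  rw [List.map_map]
  rfl

theorem flatMap_yield_map_leaf (l : List T) : (l.map leaf).flatMap (yield (N := N)) = l := by
  simp [List.flatMap_map, yield_leaf]

theorem prod_map_sign_map_leaf (σ : N × List (N ⊕ T) → ℤ) (l : List T) :
    ((l.map leaf).map (sign σ)).prod = 1 := by
  simp [Function.comp_def, sign_leaf]

theorem eq_leaf_of_toSymbol {t : PTree N T} {a : T} (h : t.toSymbol = Sum.inr a) : t = leaf a := by
  cases t with
  | leaf b => exact congrArg leaf (Sum.inr.inj h)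
  | node A cs => cases h

theorem eq_map_leaf_of_map_toSymbol {cs : List (PTree N T)} {l : List T}
    (h : cs.map toSymbol = l.map Sum.inr) : cs = l.map leaf := by
  induction cs generalizing l with
  | nil => rw [List.map_eq_nil_iff.1 h.symm, List.map_nil]
  | cons t cs ih =>
    obtain ⟨a, l, rfl, ha, hl⟩ := List.map_eq_cons_iff.1 h.symm
    rw [List.map_cons, ← eq_leaf_of_toSymbol ha.symm, ih hl.symm]

end PTree

namespace SignedGrammar

section Nested

variable {T F : Type} {m : ℕ}

/-- The nonterminals of a nested grammar: `none` is the start symbol, and `some (f, k)` derives, in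
the branch `f`, the part of a word inside its `k` innermost groups of brackets. -/
abbrev NestedNT (F : Type) (m : ℕ) : Type := Option (F × Fin (m + 1))

/-- The productions of a nested grammar. In the branch `f` the `k`-th group, counted from the
inside, may repeat the bracket pair `(b f k).1`, `(b f k).2` arbitrarily often. -/
inductive NestedRule (b : F → Fin m → List T × List T) :
    NestedNT F m × List (NestedNT F m ⊕ T) → Prop
  | start (f : F) : NestedRule b (none, [.inl (some (f, Fin.last m))])
  | loop (f : F) (k : Fin m) : NestedRule b (some (f, k.succ),
      (b f k).1.map .inr ++ [.inl (some (f, k.succ))] ++ (b f k).2.map .inr)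
  | descend (f : F) (k : Fin m) : NestedRule b (some (f, k.succ), [.inl (some (f, k.castSucc))])
  | finish (f : F) : NestedRule b (some (f, 0), [])

theorem finite_setOf_nestedRule [Finite F] (b : F → Fin m → List T × List T) :
    {p | NestedRule b p}.Finite := by
  refine ((Set.finite_range fun f : F => (none, [.inl (some (f, Fin.last m))])).union <|
    (Set.finite_range fun x : F × Fin m => (some (x.1, x.2.succ),
      (b x.1 x.2).1.map .inr ++ [.inl (some (x.1, x.2.succ))] ++ (b x.1 x.2).2.map .inr)).union <|
    (Set.finite_range fun x : F × Fin m =>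
      (some (x.1, x.2.succ), [.inl (some (x.1, x.2.castSucc))])).union <|
    Set.finite_range fun f : F => (some (f, 0), [])).subset ?_
  rintro _ (f | ⟨f, k⟩ | ⟨f, k⟩ | f)
  · exact .inl ⟨f, rfl⟩
  · exact .inr (.inl ⟨(f, k), rfl⟩)
  · exact .inr (.inr (.inl ⟨(f, k), rfl⟩))
  · exact .inr (.inr (.inr ⟨f, rfl⟩))

/-- The sign assignment of a nested grammar: only the choice of a branch `f` carries a sign. -/
def nestedSign (ε : F → ℤˣ) : NestedNT F m × List (NestedNT F m ⊕ T) → ℤ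
  | (none, .inl (some (f, _)) :: _) => ε f
  | _ => 1

/-- The signed grammar whose branch `f`, taken with sign `ε f`, generates the words
`uₘⁿᵐ ⋯ u₁ⁿ¹ v₁ⁿ¹ ⋯ vₘⁿᵐ`, the bracket pairs `(uᵢ, vᵢ)` being the values of `b f` with the
innermost first. -/
def nested [Finite F] (b : F → Fin m → List T × List T) (ε : F → ℤˣ) : SignedGrammar T where
  N := NestedNT F m
  finN := inferInstance
  start := none
  rules := {p | NestedRule b p}
  finRules := finite_setOf_nestedRule b
  sign := nestedSign ε
  sign_valid p _ := by
    unfold nestedSign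
    split
    · exact (Int.units_eq_one_or _).imp (congrArg Units.val) (congrArg Units.val)
    · exact .inl rfl

/-- The part of the word with bracket pairs `c` and multiplicities `n` that lies inside its `k`
innermost groups; the whole word is obtained for `k = Fin.last m`. -/
def nestedWord (c : Fin m → List T × List T) (n : Fin m → ℕ) (k : Fin (m + 1)) : List T :=
  Fin.induction [] (fun k w =>
    (List.replicate (n k) (c k).1).flatten ++ w ++ (List.replicate (n k) (c k).2).flatten) k

/-- The words with bracket pairs `c` and arbitrary multiplicities. -/
def nestedLanguage (c : Fin m → List T × List T) : Set (List T) :=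
  {w | ∃ n, nestedWord c n (Fin.last m) = w}

/-- One application of a bracket pair of the branch `f` to a parse tree. -/
def nestedLoop (b : F → Fin m → List T × List T) (f : F) (k : Fin m)
    (t : PTree (NestedNT F m) T) : PTree (NestedNT F m) T :=
  .node (some (f, k.succ)) ((b f k).1.map .leaf ++ [t] ++ (b f k).2.map .leaf)

/-- The parse tree of `nestedWord (b f) n k` with root `some (f, k)`. -/
def nestedTree (b : F → Fin m → List T × List T) (f : F) (n : Fin m → ℕ) (k : Fin (m + 1)) :
    PTree (NestedNT F m) T :=
  Fin.induction (motive := fun _ => PTree (NestedNT F m) T) (.node (some (f, 0)) [])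
    (fun k t => (nestedLoop b f k)^[n k] (.node (some (f, k.succ)) [t])) k

variable (b : F → Fin m → List T × List T) (f : F)

theorem nestedTree_zero (n : Fin m → ℕ) : nestedTree b f n 0 = .node (some (f, 0)) [] :=
  rfl

theorem nestedTree_succ (n : Fin m → ℕ) (k : Fin m) : nestedTree b f n k.succ =
    (nestedLoop b f k)^[n k] (.node (some (f, k.succ)) [nestedTree b f n k.castSucc]) :=
  Fin.induction_succ ..

theorem nestedWord_succ (c : Fin m → List T × List T) (n : Fin m → ℕ) (k : Fin m) :
    nestedWord c n k.succ = (List.replicate (n k) (c k).1).flatten ++ nestedWord c n k.castSucc ++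
      (List.replicate (n k) (c k).2).flatten :=
  Fin.induction_succ ..

variable {b f} in
theorem nestedTree_induction {P : Fin (m + 1) → PTree (NestedNT F m) T → Prop}
    (finish : P 0 (.node (some (f, 0)) []))
    (descend : ∀ k t, P (Fin.castSucc k) t → P k.succ (.node (some (f, k.succ)) [t]))
    (loop : ∀ k t, P (Fin.succ k) t → P k.succ (nestedLoop b f k t))
    (n : Fin m → ℕ) (k : Fin (m + 1)) : P k (nestedTree b f n k) := by
  induction k using Fin.induction with
  | zero => exact finish
  | succ k ih =>
    rw [nestedTree_succ]
    exact Function.Iterate.rec (P k.succ) (descend k _ ih) (loop k) (n k)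

theorem toSymbol_nestedTree (n : Fin m → ℕ) (k : Fin (m + 1)) :
    (nestedTree b f n k).toSymbol = .inl (some (f, k)) :=
  nestedTree_induction (P := fun k t => t.toSymbol = .inl (some (f, k))) rfl (fun _ _ _ => rfl)
    (fun _ _ _ => rfl) n k

variable {b f} in
theorem valid_nestedLoop {k : Fin m} {t : PTree (NestedNT F m) T}
    (ht : t.Valid {p | NestedRule b p}) (hroot : t.toSymbol = .inl (some (f, k.succ))) :
    (nestedLoop b f k t).Valid {p | NestedRule b p} := by
  refine .node _ _ ?_ fun c hc => ?_
  · rw [List.map_append, List.map_append, PTree.map_toSymbol_map_leaf,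
      PTree.map_toSymbol_map_leaf, List.map_singleton, hroot]
    exact .loop f k
  · simp only [List.mem_append, List.mem_map, List.mem_singleton] at hc
    obtain (⟨a, -, rfl⟩ | rfl) | ⟨a, -, rfl⟩ := hc
    exacts [.leaf a, ht, .leaf a]

theorem valid_nestedTree (n : Fin m → ℕ) (k : Fin (m + 1)) :
    (nestedTree b f n k).Valid {p | NestedRule b p} := by
  refine (nestedTree_induction (b := b) (P := fun k t => t.Valid {p | NestedRule b p} ∧
    t.toSymbol = .inl (some (f, k))) ⟨?_, rfl⟩ ?_ ?_ n k).1
  · exact .node _ _ (.finish f) (List.forall_mem_nil _)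
  · rintro k t ⟨ht, hroot⟩
    refine ⟨.node _ _ ?_ (List.forall_mem_singleton.2 ht), rfl⟩
    rw [List.map_singleton, hroot]
    exact .descend f k
  · exact fun k t ht => ⟨valid_nestedLoop ht.1 ht.2, rfl⟩

theorem sign_nestedTree (ε : F → ℤˣ) (n : Fin m → ℕ) (k : Fin (m + 1)) :
    (nestedTree b f n k).sign (nestedSign ε) = 1 := by
  refine nestedTree_induction (P := fun _ t => t.sign (nestedSign ε) = 1) ?_ ?_ ?_ n k
  · rw [PTree.sign_node]
    rfl
  · intro k t ht
    rw [PTree.sign_node, List.map_singleton, List.map_singleton, List.prod_singleton, ht]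
    rfl
  · intro k t ht
    rw [nestedLoop, PTree.sign_node, List.map_append (f := PTree.sign _),
      List.map_append (f := PTree.sign _), List.prod_append, List.prod_append,
      PTree.prod_map_sign_map_leaf, PTree.prod_map_sign_map_leaf, List.map_singleton,
      List.prod_singleton, ht]
    rfl

theorem yield_iterate_nestedLoop (k : Fin m) (t : PTree (NestedNT F m) T) (i : ℕ) :
    ((nestedLoop b f k)^[i] t).yield = (List.replicate i (b f k).1).flatten ++ t.yield ++
      (List.replicate i (b f k).2).flatten := by
  induction i with
  | zero => simp
  | succ i ih =>
    rw [Function.iterate_succ_apply', nestedLoop, PTree.yield_node, List.flatMap_append,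
      List.flatMap_append, PTree.flatMap_yield_map_leaf, PTree.flatMap_yield_map_leaf,
      List.flatMap_singleton, ih, List.replicate_succ (a := (b f k).1),
      List.replicate_succ' (a := (b f k).2)]
    simp only [List.flatten_cons, List.flatten_append, List.flatten_nil, List.append_assoc,
      List.append_nil]

theorem yield_nestedTree (n : Fin m → ℕ) (k : Fin (m + 1)) :
    (nestedTree b f n k).yield = nestedWord (b f) n k := by
  induction k using Fin.induction with
  | zero =>
    rw [nestedTree_zero, PTree.yield_node]
    rfl
  | succ k ih =>
    rw [nestedTree_succ, yield_iterate_nestedLoop, PTree.yield_node, List.flatMap_singleton, ih,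
      nestedWord_succ]

theorem nestedTree_congr {n n' : Fin m → ℕ} {k : Fin (m + 1)}
    (h : ∀ i : Fin m, i.castSucc < k → n i = n' i) :
    nestedTree b f n k = nestedTree b f n' k := by
  induction k using Fin.induction with
  | zero => rfl
  | succ k ih =>
    rw [nestedTree_succ, nestedTree_succ, h k Fin.castSucc_lt_succ,
      ih fun i hi => h i (hi.trans Fin.castSucc_lt_succ)]

theorem nestedTree_update_succ (n : Fin m → ℕ) (k : Fin m) (i : ℕ) :
    nestedTree b f (Function.update n k i) k.succ =
      (nestedLoop b f k)^[i] (.node (some (f, k.succ)) [nestedTree b f n k.castSucc]) := by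
  have hbelow : nestedTree b f (Function.update n k i) k.castSucc = nestedTree b f n k.castSucc :=
    nestedTree_congr b f fun j hj =>
      Function.update_of_ne (Fin.castSucc_lt_castSucc_iff.1 hj).ne _ _
  rw [nestedTree_succ, Function.update_self, hbelow]

variable {b f} in
theorem exists_eq_nestedTree {t : PTree (NestedNT F m) T} (ht : t.Valid {p | NestedRule b p})
    {k : Fin (m + 1)} (hroot : t.toSymbol = .inl (some (f, k))) :
    ∃ n, t = nestedTree b f n k := by
  induction ht generalizing k with
  | leaf a => cases hroot
  | node A cs hrule _ ih =>
    obtain rfl : A = some (f, k) := Sum.inl.inj hroot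
    generalize hsymbols : cs.map PTree.toSymbol = symbols at hrule
    cases hrule with
    | loop _ k =>
      obtain ⟨pre, right, rfl, hpre, hright⟩ := List.map_eq_append_iff.1 hsymbols
      obtain ⟨left, mid, rfl, hleft, hmid⟩ := List.map_eq_append_iff.1 hpre
      obtain ⟨t, rfl, htroot⟩ := List.map_eq_singleton_iff.1 hmid
      obtain ⟨n, rfl⟩ := ih t (by simp) htroot
      refine ⟨Function.update n k (n k + 1), ?_⟩
      rw [PTree.eq_map_leaf_of_map_toSymbol hleft, PTree.eq_map_leaf_of_map_toSymbol hright,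
        nestedTree_update_succ, Function.iterate_succ_apply', ← nestedTree_succ, nestedLoop]
    | descend _ k =>
      obtain ⟨t, rfl, htroot⟩ := List.map_eq_singleton_iff.1 hsymbols
      obtain ⟨n, rfl⟩ := ih t (List.mem_singleton_self t) htroot
      exact ⟨Function.update n k 0, (nestedTree_update_succ b f n k 0).symm⟩
    | finish =>
      rw [List.map_eq_nil_iff.1 hsymbols]
      exact ⟨0, rfl⟩

/-- The parse tree that chooses the branch `f` and the multiplicities `n`. -/
def nestedParseTree (n : Fin m → ℕ) : PTree (NestedNT F m) T :=
  .node none [nestedTree b f n (Fin.last m)]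

theorem yield_nestedParseTree (n : Fin m → ℕ) :
    (nestedParseTree b f n).yield = nestedWord (b f) n (Fin.last m) := by
  rw [nestedParseTree, PTree.yield_node, List.flatMap_singleton, yield_nestedTree]

theorem sign_nestedParseTree (ε : F → ℤˣ) (n : Fin m → ℕ) :
    (nestedParseTree b f n).sign (nestedSign ε) = ε f := by
  rw [nestedParseTree, PTree.sign_node, List.map_singleton, List.map_singleton, toSymbol_nestedTree,
    List.prod_singleton, sign_nestedTree, mul_one]
  rfl

variable {b f} in
theorem branch_eq_of_nestedParseTree_eq {f' : F} {n n' : Fin m → ℕ}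
    (h : nestedParseTree b f n = nestedParseTree b f' n') : f = f' := by
  have htree := (List.cons.inj (PTree.node.inj h).2).1
  have hroot := congrArg PTree.toSymbol htree
  rw [toSymbol_nestedTree, toSymbol_nestedTree] at hroot
  exact congrArg Prod.fst (Option.some.inj (Sum.inl.inj hroot))

variable {f} in
theorem finsum_sign_nestedParseTree (ε : F → ℤˣ)
    (hf : Function.Injective fun n => nestedWord (b f) n (Fin.last m)) (w : List T) :
    ∑ᶠ t ∈ nestedParseTree b f '' {n | nestedWord (b f) n (Fin.last m) = w},
        t.sign (nestedSign ε) = (nestedLanguage (b f)).indicator (fun _ => (ε f : ℤ)) w := by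
  by_cases hw : w ∈ nestedLanguage (b f)
  · rw [Set.indicator_of_mem hw]
    obtain ⟨n, rfl⟩ := hw
    have hsingle : {n' | nestedWord (b f) n' (Fin.last m) = nestedWord (b f) n (Fin.last m)} =
        {n} := Set.ext fun n' => hf.eq_iff
    rw [hsingle, Set.image_singleton, finsum_mem_singleton, sign_nestedParseTree]
  · have hempty : {n | nestedWord (b f) n (Fin.last m) = w} = ∅ :=
      Set.eq_empty_of_forall_notMem fun n hn => hw ⟨n, hn⟩
    rw [Set.indicator_of_notMem hw, hempty, Set.image_empty, finsum_mem_empty]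

theorem isParseTree_nested_iff [Finite F] (ε : F → ℤˣ) {t : PTree (NestedNT F m) T} :
    (nested b ε).IsParseTree t ↔ ∃ f n, t = nestedParseTree b f n := by
  constructor
  · rintro ⟨_ | ⟨A, cs, hrule, hcs⟩, hroot⟩
    · cases hroot
    obtain rfl : A = none := Sum.inl.inj hroot
    generalize hsymbols : cs.map PTree.toSymbol = symbols at hrule
    cases hrule with
    | start f =>
      obtain ⟨t, rfl, ht⟩ := List.map_eq_singleton_iff.1 hsymbols
      obtain ⟨n, rfl⟩ := exists_eq_nestedTree (hcs t (List.mem_singleton_self t)) ht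
      exact ⟨f, n, rfl⟩
  · rintro ⟨f, n, rfl⟩
    refine ⟨.node _ _ ?_ (List.forall_mem_singleton.2 (valid_nestedTree b f n _)), rfl⟩
    change NestedRule b (none, [PTree.toSymbol (nestedTree b f n (Fin.last m))])
    rw [toSymbol_nestedTree]
    exact .start f

theorem parseTreesOf_nested [Finite F] (ε : F → ℤˣ) (w : List T) : (nested b ε).parseTreesOf w =
    ⋃ f, nestedParseTree b f '' {n | nestedWord (b f) n (Fin.last m) = w} := by
  refine Set.Subset.antisymm ?_ (Set.iUnion_subset fun f => ?_)
  · rintro t ⟨ht, rfl⟩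
    obtain ⟨f, n, rfl⟩ := (isParseTree_nested_iff b ε).1 ht
    exact Set.mem_iUnion.2 ⟨f, n, (yield_nestedParseTree b f n).symm, rfl⟩
  · rintro _ ⟨n, rfl, rfl⟩
    exact ⟨(isParseTree_nested_iff b ε).2 ⟨f, n, rfl⟩, yield_nestedParseTree b f n⟩

variable {b}

theorem finite_setOf_nestedWord_eq {c : Fin m → List T × List T}
    (hc : Function.Injective fun n => nestedWord c n (Fin.last m)) (w : List T) :
    {n | nestedWord c n (Fin.last m) = w}.Finite :=
  (Set.finite_singleton w).preimage hc.injOn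

theorem admissible_nested [Finite F] (ε : F → ℤˣ)
    (hb : ∀ f, Function.Injective fun n => nestedWord (b f) n (Fin.last m)) :
    (nested b ε).Admissible := by
  intro w
  rw [parseTreesOf_nested]
  exact Set.finite_iUnion fun f => (finite_setOf_nestedWord_eq (hb f) w).image _

theorem count_nested [Fintype F] (ε : F → ℤˣ)
    (hb : ∀ f, Function.Injective fun n => nestedWord (b f) n (Fin.last m)) (w : List T) :
    (nested b ε).count w = ∑ f, (nestedLanguage (b f)).indicator (fun _ => (ε f : ℤ)) w := by
  have hdisjoint : Pairwise (Function.onFun Disjoint fun f =>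
      nestedParseTree b f '' {n | nestedWord (b f) n (Fin.last m) = w}) := by
    refine fun f f' hne => Set.disjoint_left.2 ?_
    rintro _ ⟨n, -, rfl⟩ ⟨n', -, h⟩
    exact hne (branch_eq_of_nestedParseTree_eq h).symm
  rw [count, parseTreesOf_nested]
  calc _ = ∑ᶠ f, ∑ᶠ t ∈ nestedParseTree b f '' {n | nestedWord (b f) n (Fin.last m) = w},
        t.sign (nestedSign ε) := finsum_mem_iUnion hdisjoint fun f =>
          (finite_setOf_nestedWord_eq (hb f) w).image _
    _ = _ := by
      rw [finsum_eq_sum_of_fintype]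
      exact Finset.sum_congr rfl fun f _ => finsum_sign_nestedParseTree b ε (hb f) w

end Nested

end SignedGrammar

section Ogden

variable {T N : Type*}

/-- `Parses R s w`: the symbols of the sentential form `s` are the roots of a forest of parse trees
with productions in `R` and yield `w`. Keeping `R` as a parameter allows one to forbid productions
that have already been used. -/
inductive Parses (R : Set (ContextFreeRule T N)) : List (Symbol T N) → List T → Prop
  | nil : Parses R [] []
  | terminal (a : T) {s : List (Symbol T N)} {w : List T} :
      Parses R s w → Parses R (.terminal a :: s) (a :: w)
  | nonterminal {r : ContextFreeRule T N} {s : List (Symbol T N)} {u v : List T} :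
      r ∈ R → Parses R r.output u → Parses R s v →
        Parses R (.nonterminal r.input :: s) (u ++ v)

section Derives

variable {g : ContextFreeGrammar T}

theorem derives_of_rule {r : ContextFreeRule T g.NT} (hr : r ∈ g.rules) {t : List (Symbol T g.NT)}
    (h : g.Derives r.output t) : g.Derives [.nonterminal r.input] t :=
  ContextFreeGrammar.Produces.trans_derives ⟨r, hr, .input_output⟩ h

theorem derives_cons_of_rule {r : ContextFreeRule T g.NT} (hr : r ∈ g.rules)
    {s t t' : List (Symbol T g.NT)} (h : g.Derives r.output t) (hs : g.Derives s t') :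
    g.Derives (.nonterminal r.input :: s) (t ++ t') :=
  ((derives_of_rule hr h).append_right s).trans (hs.append_left t)

end Derives

namespace Parses

variable {R : Set (ContextFreeRule T N)}

theorem append {s t : List (Symbol T N)} {u v : List T} (hs : Parses R s u) (ht : Parses R t v) :
    Parses R (s ++ t) (u ++ v) := by
  induction hs with
  | nil => exact ht
  | terminal a _ ih => exact .terminal a ih
  | nonterminal hr hout _ _ ih =>
    rw [List.append_assoc]
    exact .nonterminal hr hout ih

theorem exists_of_append {s t : List (Symbol T N)} {w : List T} (h : Parses R (s ++ t) w) :
    ∃ u v, w = u ++ v ∧ Parses R s u ∧ Parses R t v := by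
  induction s generalizing w with
  | nil => exact ⟨[], w, rfl, .nil, h⟩
  | cons X s ih =>
    cases h with
    | terminal a h =>
      obtain ⟨u, v, rfl, hu, hv⟩ := ih h
      exact ⟨a :: u, v, rfl, .terminal a hu, hv⟩
    | @nonterminal r _ x _ hr hx h =>
      obtain ⟨u, v, rfl, hu, hv⟩ := ih h
      exact ⟨x ++ u, v, (List.append_assoc x u v).symm, .nonterminal hr hx hu, hv⟩

theorem map_terminal (w : List T) : Parses R (w.map .terminal) w := by
  induction w with
  | nil => exact .nil
  | cons a w ih => exact .terminal a ih

theorem of_derives {g : ContextFreeGrammar T} {s : List (Symbol T g.NT)} {w : List T}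
    (h : g.Derives s (w.map .terminal)) : Parses (g.rules : Set _) s w := by
  induction h using Relation.ReflTransGen.head_induction_on with
  | refl => exact map_terminal w
  | head hprod _ ih =>
    obtain ⟨r, hr, hrw⟩ := hprod
    obtain ⟨p, q, rfl, rfl⟩ := hrw.exists_parts
    obtain ⟨_, y, rfl, hpr, hq⟩ := ih.exists_of_append
    obtain ⟨x, z, rfl, hp, hout⟩ := hpr.exists_of_append
    simpa only [List.append_assoc, List.singleton_append] using
      hp.append (.nonterminal hr hout hq)

theorem derives {g : ContextFreeGrammar T} {R : Set (ContextFreeRule T g.NT)}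
    (hR : R ⊆ g.rules) {s : List (Symbol T g.NT)} {w : List T} (h : Parses R s w) :
    g.Derives s (w.map .terminal) := by
  induction h with
  | nil => exact .refl _
  | terminal a _ ih => exact ih.append_left [.terminal a]
  | nonterminal hr _ _ ihu ihv =>
    rw [List.map_append]
    exact derives_cons_of_rule (hR hr) ihu ihv

end Parses

variable {g : ContextFreeGrammar T}

/-- The sentential form `u A v` with a single nonterminal `A`. -/
def singleNonterminal (u : List T) (A : N) (v : List T) : List (Symbol T N) :=
  u.map .terminal ++ [.nonterminal A] ++ v.map .terminal

theorem derives_of_derives_singleNonterminal {s t : List (Symbol T g.NT)} {u v : List T} {A : g.NT}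
    (hs : g.Derives s (singleNonterminal u A v)) (hA : g.Derives [.nonterminal A] t) :
    g.Derives s (u.map .terminal ++ t ++ v.map .terminal) :=
  hs.trans ((hA.append_left _).append_right _)

theorem derives_singleNonterminal_trans {s : List (Symbol T g.NT)} {u v x y : List T}
    {A B : g.NT} (hs : g.Derives s (singleNonterminal u A v))
    (hA : g.Derives [.nonterminal A] (singleNonterminal x B y)) :
    g.Derives s (singleNonterminal (u ++ x) B (y ++ v)) := by
  simpa only [singleNonterminal, List.map_append, List.append_assoc] using
    derives_of_derives_singleNonterminal hs hA

theorem derives_singleNonterminal_iterate {A : g.NT} {x y : List T}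
    (h : g.Derives [.nonterminal A] (singleNonterminal x A y)) (n : ℕ) :
    g.Derives [.nonterminal A]
      (singleNonterminal (List.replicate n x).flatten A (List.replicate n y).flatten) := by
  induction n with
  | zero => exact .refl _
  | succ n ih =>
    simpa only [List.replicate_succ' (a := x), List.replicate_succ (a := y), List.flatten_append,
      List.flatten_cons, List.flatten_nil, List.append_nil] using
      derives_singleNonterminal_trans ih h

/-- The conclusion of Ogden's lemma before iteration, with the letters satisfying `p` marked: `s`
derives `w` through a nonterminal `A` that derives itself with a marked letter beside it. -/
def IsPumpable (g : ContextFreeGrammar T) (p : T → Bool) (s : List (Symbol T g.NT))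
    (w : List T) : Prop :=
  ∃ (A : g.NT) (u x z y v : List T), w = u ++ x ++ z ++ y ++ v ∧ 0 < (x ++ y).countP p ∧
    g.Derives s (singleNonterminal u A v) ∧
    g.Derives [.nonterminal A] (singleNonterminal x A y) ∧
    g.Derives [.nonterminal A] (z.map .terminal)

theorem IsPumpable.of_derives {p : T → Bool} {s t : List (Symbol T g.NT)} {l r w : List T}
    (hs : g.Derives s (l.map .terminal ++ t ++ r.map .terminal)) (ht : IsPumpable g p t w) :
    IsPumpable g p s (l ++ w ++ r) := by
  obtain ⟨A, u, x, z, y, v, rfl, hmark, htA, hAA, hAz⟩ := ht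
  refine ⟨A, l ++ u, x, z, y, v ++ r, by simp only [List.append_assoc], hmark, ?_, hAA, hAz⟩
  have := hs.trans ((htA.append_left (l.map .terminal)).append_right (r.map .terminal))
  simpa only [singleNonterminal, List.map_append, List.append_assoc] using this

theorem IsPumpable.exists_forall_derives {p : T → Bool} {s : List (Symbol T g.NT)} {w : List T}
    (h : IsPumpable g p s w) :
    ∃ u x z y v : List T, w = u ++ x ++ z ++ y ++ v ∧ 0 < (x ++ y).countP p ∧
      ∀ n, g.Derives s ((u ++ (List.replicate n x).flatten ++ z ++
        (List.replicate n y).flatten ++ v).map .terminal) := by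
  obtain ⟨A, u, x, z, y, v, rfl, hmark, hsA, hAA, hAz⟩ := h
  refine ⟨u, x, z, y, v, rfl, hmark, fun n => ?_⟩
  have := derives_of_derives_singleNonterminal
    (derives_singleNonterminal_trans hsA (derives_singleNonterminal_iterate hAA n)) hAz
  simpa only [List.map_append, List.append_assoc] using this

/-- In the second alternative the occurrence of `r` is an innermost one: its subtree uses `r` only
at the root. -/
theorem Parses.diff_singleton_or_exists {R : Set (ContextFreeRule T g.NT)} (hR : R ⊆ g.rules)
    (r : ContextFreeRule T g.NT) {s : List (Symbol T g.NT)} {w : List T} (h : Parses R s w) :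
    Parses (R \ {r}) s w ∨
      ∃ u z v, w = u ++ z ++ v ∧ g.Derives s (singleNonterminal u r.input v) ∧
        Parses (R \ {r}) r.output z := by
  induction h with
  | nil => exact .inl .nil
  | terminal a _ ih =>
    obtain ih | ⟨u, z, v, rfl, hs, hz⟩ := ih
    · exact .inl (.terminal a ih)
    · exact .inr ⟨a :: u, z, v, rfl, hs.append_left [.terminal a], hz⟩
  | @nonterminal q s x y hq hx hy ihx ihy =>
    obtain ihy | ⟨u, z, v, rfl, hs, hz⟩ := ihy
    · obtain ihx | ⟨u, z, v, rfl, hout, hz⟩ := ihx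
      · by_cases hqr : q = r
        · subst hqr
          exact .inr ⟨[], x, y, rfl, (hy.derives hR).append_left [.nonterminal q.input], ihx⟩
        · exact .inl (.nonterminal ⟨hq, hqr⟩ ihx ihy)
      · refine .inr ⟨u, z, v ++ y, by simp only [List.append_assoc], ?_, hz⟩
        have := derives_cons_of_rule (hR hq) hout (hy.derives hR)
        simpa only [singleNonterminal, List.map_append, List.append_assoc] using this
    · refine .inr ⟨x ++ u, z, v, by simp only [List.append_assoc], ?_, hz⟩
      have := derives_cons_of_rule (hR hq) (hx.derives hR) hs
      simpa only [singleNonterminal, List.map_append, List.append_assoc] using this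

theorem Parses.countP_le_or_isPumpable_of_rule {p : T → Bool} {R : Set (ContextFreeRule T g.NT)}
    (hR : R ⊆ g.rules) {r : ContextFreeRule T g.NT} (hr : r ∈ R) {w : List T}
    (hw : Parses R r.output w) {b : ℕ}
    (hb : ∀ z, Parses (R \ {r}) r.output z → z.countP p ≤ b ∨ IsPumpable g p r.output z) :
    w.countP p ≤ b ∨ IsPumpable g p [.nonterminal r.input] w := by
  obtain ⟨u, z, v, rfl, hrr, hz⟩ : ∃ u z v, w = u ++ z ++ v ∧
      g.Derives [.nonterminal r.input] (singleNonterminal u r.input v) ∧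
      Parses (R \ {r}) r.output z := by
    obtain hw | ⟨u, z, v, rfl, hout, hz⟩ := hw.diff_singleton_or_exists hR r
    · exact ⟨[], w, [], by simp only [List.nil_append, List.append_nil], .refl _, hw⟩
    · exact ⟨u, z, v, rfl, derives_of_rule (hR hr) hout, hz⟩
  have hrz := derives_of_rule (hR hr) (hz.derives (Set.sdiff_subset.trans hR))
  obtain hmark | hmark := Nat.eq_zero_or_pos ((u ++ v).countP p)
  · refine (hb z hz).imp (fun hle => ?_) fun hpump => hpump.of_derives
      (derives_of_derives_singleNonterminal hrr (derives_of_rule (hR hr) (.refl _)))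
    simp only [List.countP_append] at hmark ⊢
    omega
  · exact .inr ⟨r.input, [], u, z, v, [], by simp only [List.nil_append, List.append_nil],
      hmark, .refl _, hrr, hrz⟩

/-- Below an innermost occurrence of the root production, that production is no longer available.
If no marked letter is lost on the way down to it, the number of available productions therefore
bounds the number of marked letters. -/
theorem Parses.countP_le_or_isPumpable (p : T → Bool) {d : ℕ} (hd_pos : 0 < d)
    (hd : ∀ r ∈ g.rules, r.output.length ≤ d) (R : Finset (ContextFreeRule T g.NT))
    (hR : R ⊆ g.rules) {s : List (Symbol T g.NT)} {w : List T} (h : Parses (R : Set _) s w) :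
    w.countP p ≤ s.length * d ^ R.card ∨ IsPumpable g p s w := by
  classical
  induction R using Finset.strongInduction generalizing s w with
  | H R ihR =>
    induction h with
    | nil => exact .inl (Nat.zero_le _)
    | @terminal a s w _ ih =>
      refine ih.imp (fun hle => ?_) fun hpump => ?_
      · have : 0 < d ^ R.card := pow_pos hd_pos _
        have : [a].countP p ≤ 1 := List.countP_le_length
        rw [← List.singleton_append, List.countP_append, List.length_cons, Nat.succ_mul]
        omega
      · have : IsPumpable g p (.terminal a :: s) ([a] ++ w ++ []) :=
          .of_derives (by simpa using .refl _) hpump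
        simpa using this
    | @nonterminal r s x y hr hx hy _ ihy =>
      have hrec (z : List T) (hz : Parses (R \ {r}) r.output z) :
          z.countP p ≤ d ^ R.card ∨ IsPumpable g p r.output z := by
        rw [← Finset.coe_erase] at hz
        refine (ihR _ (Finset.erase_ssubset hr) ((R.erase_subset r).trans hR) hz).imp_left
          fun hle => hle.trans ?_
        calc r.output.length * d ^ (R.erase r).card
            ≤ d * d ^ (R.erase r).card := Nat.mul_le_mul_right _ (hd r (hR hr))
          _ = d ^ R.card := by rw [← pow_succ', Finset.card_erase_add_one hr]
      obtain hlex | hpump := hx.countP_le_or_isPumpable_of_rule hR hr hrec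
      · refine ihy.imp (fun hley => ?_) fun hpump => ?_
        · rw [List.countP_append, List.length_cons, Nat.succ_mul]
          omega
        · have hxr : Parses (R : Set _) [.nonterminal r.input] (x ++ []) :=
            .nonterminal hr hx .nil
          have : IsPumpable g p (.nonterminal r.input :: s) (x ++ y ++ []) :=
            .of_derives (by simpa using (hxr.derives hR).append_right s) hpump
          simpa using this
      · exact .inr (hpump.of_derives (l := [])
          ((hy.derives hR).append_left [.nonterminal r.input]))

/-- Ogden's lemma for the markings that mark all occurrences of a given set of letters. -/
theorem exists_pumping_of_isContextFree {L : Language T} (hL : L.IsContextFree) (p : T → Bool) :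
    ∃ N : ℕ, ∀ w ∈ L, N ≤ w.countP p →
      ∃ u x z y v : List T, w = u ++ x ++ z ++ y ++ v ∧ 0 < (x ++ y).countP p ∧
        ∀ n, u ++ (List.replicate n x).flatten ++ z ++ (List.replicate n y).flatten ++ v ∈ L := by
  obtain ⟨g, rfl⟩ := hL
  obtain ⟨d, hd_pos, hd⟩ : ∃ d, 0 < d ∧ ∀ r ∈ g.rules, r.output.length ≤ d :=
    ⟨g.rules.sup (fun r => r.output.length) + 1, Nat.succ_pos _, fun r hr =>
      (Finset.le_sup (f := fun r => r.output.length) hr).trans (Nat.le_succ _)⟩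
  refine ⟨d ^ g.rules.card + 1, fun w hw hmarks => ?_⟩
  have hparse : Parses (g.rules : Set _) [.nonterminal g.initial] w :=
    .of_derives ((g.mem_language_iff w).1 hw)
  obtain hle | hpump :=
    hparse.countP_le_or_isPumpable p hd_pos hd g.rules subset_rfl
  · rw [List.length_singleton, one_mul] at hle
    omega
  · simpa only [g.mem_language_iff] using hpump.exists_forall_derives

end Ogden

section CyclicLanguage

open SignedGrammar

/-- The word `aⁱbʲcᵏ` over the alphabet `a = 0`, `b = 1`, `c = 2`. -/
def abcWord (i j k : ℕ) : List (Fin 3) :=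
  List.replicate i 0 ++ List.replicate j 1 ++ List.replicate k 2

/-- The bracket pairs of three branches, generating the words `aⁱbʲcᵏ` with `i ≥ j`, with `j ≥ k`
and with `i ≥ k` respectively. -/
def abcBrackets : Fin 3 → Fin 3 → List (Fin 3) × List (Fin 3) :=
  ![![([0], [1]), ([0], []), ([], [2])],
    ![([1], [2]), ([1], []), ([0], [])],
    ![([1], []), ([0], [2]), ([0], [])]]

/-- The signed grammar counting `[i ≥ j] + [j ≥ k] - [i ≥ k]` parse trees for `aⁱbʲcᵏ`. -/
def abcGrammar : SignedGrammar (Fin 3) :=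
  nested abcBrackets ![1, 1, -1]

/-- The weakly decreasing triples and, with ties broken suitably, their cyclic rotations: those
with `[i ≥ j] + [j ≥ k] - [i ≥ k] = 1`. -/
def IsCyclicTriple (i j k : ℕ) : Prop :=
  (k ≤ j ∧ j ≤ i) ∨ (j ≤ i ∧ i < k) ∨ (i < k ∧ k ≤ j)

/-- The words `aⁱbʲcᵏ` whose exponents are in the cyclic order `IsCyclicTriple`. -/
def cyclicLanguage : Language (Fin 3) :=
  {w | ∃ i j k, w = abcWord i j k ∧ IsCyclicTriple i j k}

theorem count_abcWord (i j k : ℕ) (a : Fin 3) : (abcWord i j k).count a = ![i, j, k] a := by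
  fin_cases a <;> simp [abcWord, List.count_replicate]

theorem pairwise_le_abcWord (i j k : ℕ) : (abcWord i j k).Pairwise (· ≤ ·) := by
  simp only [abcWord, List.pairwise_append, List.pairwise_replicate, List.mem_append,
    List.mem_replicate]
  grind

theorem abcWord_inj {i j k i' j' k' : ℕ} :
    abcWord i j k = abcWord i' j' k' ↔ i = i' ∧ j = j' ∧ k = k' := by
  refine ⟨fun h => ?_, by rintro ⟨rfl, rfl, rfl⟩; rfl⟩
  have hcount (a : Fin 3) : ![i, j, k] a = ![i', j', k'] a := by
    rw [← count_abcWord, ← count_abcWord, h]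
  exact ⟨hcount 0, hcount 1, hcount 2⟩

section Generates

theorem nestedWord_last_three {T : Type} (c : Fin 3 → List T × List T) (n : Fin 3 → ℕ) :
    nestedWord c n (Fin.last 3) =
      (List.replicate (n 2) (c 2).1).flatten ++ ((List.replicate (n 1) (c 1).1).flatten ++
        ((List.replicate (n 0) (c 0).1).flatten ++ [] ++ (List.replicate (n 0) (c 0).2).flatten) ++
          (List.replicate (n 1) (c 1).2).flatten) ++ (List.replicate (n 2) (c 2).2).flatten :=
  rfl

theorem nestedWord_abcBrackets_zero (n : Fin 3 → ℕ) :
    nestedWord (abcBrackets 0) n (Fin.last 3) = abcWord (n 1 + n 0) (n 0) (n 2) := by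
  rw [nestedWord_last_three, abcWord, List.replicate_add]
  simp [abcBrackets, -List.replicate_append_replicate]

theorem nestedWord_abcBrackets_one (n : Fin 3 → ℕ) :
    nestedWord (abcBrackets 1) n (Fin.last 3) = abcWord (n 2) (n 1 + n 0) (n 0) := by
  rw [nestedWord_last_three, abcWord, List.replicate_add]
  simp [abcBrackets, -List.replicate_append_replicate]

theorem nestedWord_abcBrackets_two (n : Fin 3 → ℕ) :
    nestedWord (abcBrackets 2) n (Fin.last 3) = abcWord (n 2 + n 1) (n 0) (n 1) := by
  rw [nestedWord_last_three, abcWord, List.replicate_add]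
  simp [abcBrackets, -List.replicate_append_replicate]

theorem injective_nestedWord_abcBrackets (f : Fin 3) :
    Function.Injective fun n => nestedWord (abcBrackets f) n (Fin.last 3) := by
  intro n n' (h : nestedWord (abcBrackets f) n _ = nestedWord (abcBrackets f) n' _)
  have heq : n 0 = n' 0 ∧ n 1 = n' 1 ∧ n 2 = n' 2 := by
    match f, h with
    | 0, h =>
      rw [nestedWord_abcBrackets_zero, nestedWord_abcBrackets_zero, abcWord_inj] at h
      omega
    | 1, h =>
      rw [nestedWord_abcBrackets_one, nestedWord_abcBrackets_one, abcWord_inj] at h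
      omega
    | 2, h =>
      rw [nestedWord_abcBrackets_two, nestedWord_abcBrackets_two, abcWord_inj] at h
      omega
  funext a
  fin_cases a
  exacts [heq.1, heq.2.1, heq.2.2]

theorem abcWord_mem_nestedLanguage_zero {i j k : ℕ} :
    abcWord i j k ∈ nestedLanguage (abcBrackets 0) ↔ j ≤ i := by
  constructor
  · rintro ⟨n, hn⟩
    rw [nestedWord_abcBrackets_zero, abcWord_inj] at hn
    omega
  · refine fun h => ⟨![j, i - j, k], ?_⟩
    rw [nestedWord_abcBrackets_zero, abcWord_inj]
    exact ⟨Nat.sub_add_cancel h, rfl, rfl⟩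

theorem abcWord_mem_nestedLanguage_one {i j k : ℕ} :
    abcWord i j k ∈ nestedLanguage (abcBrackets 1) ↔ k ≤ j := by
  constructor
  · rintro ⟨n, hn⟩
    rw [nestedWord_abcBrackets_one, abcWord_inj] at hn
    omega
  · refine fun h => ⟨![k, j - k, i], ?_⟩
    rw [nestedWord_abcBrackets_one, abcWord_inj]
    exact ⟨rfl, Nat.sub_add_cancel h, rfl⟩

theorem abcWord_mem_nestedLanguage_two {i j k : ℕ} :
    abcWord i j k ∈ nestedLanguage (abcBrackets 2) ↔ k ≤ i := by
  constructor
  · rintro ⟨n, hn⟩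
    rw [nestedWord_abcBrackets_two, abcWord_inj] at hn
    omega
  · refine fun h => ⟨![j, k, i - k], ?_⟩
    rw [nestedWord_abcBrackets_two, abcWord_inj]
    exact ⟨Nat.sub_add_cancel h, rfl, rfl⟩

theorem exists_eq_abcWord_of_mem_nestedLanguage {f : Fin 3} {w : List (Fin 3)}
    (hw : w ∈ nestedLanguage (abcBrackets f)) : ∃ i j k, w = abcWord i j k := by
  obtain ⟨n, rfl⟩ := hw
  fin_cases f
  exacts [⟨_, _, _, nestedWord_abcBrackets_zero n⟩, ⟨_, _, _, nestedWord_abcBrackets_one n⟩,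
    ⟨_, _, _, nestedWord_abcBrackets_two n⟩]

theorem count_abcGrammar_abcWord (i j k : ℕ) : abcGrammar.count (abcWord i j k) =
    (if j ≤ i then 1 else 0) + (if k ≤ j then 1 else 0) - (if k ≤ i then 1 else 0) := by
  classical
  rw [abcGrammar, count_nested _ injective_nestedWord_abcBrackets, Fin.sum_univ_three]
  simp only [Set.indicator_apply, abcWord_mem_nestedLanguage_zero, abcWord_mem_nestedLanguage_one,
    abcWord_mem_nestedLanguage_two]
  split_ifs <;> rfl

theorem count_abcGrammar_of_forall_ne {w : List (Fin 3)} (hw : ∀ i j k, w ≠ abcWord i j k) :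
    abcGrammar.count w = 0 := by
  rw [abcGrammar, count_nested _ injective_nestedWord_abcBrackets]
  refine Finset.sum_eq_zero fun f _ => Set.indicator_of_notMem (fun hmem => ?_) _
  obtain ⟨i, j, k, h⟩ := exists_eq_abcWord_of_mem_nestedLanguage hmem
  exact hw i j k h

theorem abcGrammar_generates_cyclicLanguage : abcGrammar.Generates cyclicLanguage := by
  refine ⟨admissible_nested _ injective_nestedWord_abcBrackets, ?_, fun w hw => ?_⟩
  · rintro _ ⟨i, j, k, rfl, h⟩
    rw [count_abcGrammar_abcWord]
    unfold IsCyclicTriple at h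
    split_ifs <;> omega
  · by_cases habc : ∃ i j k, w = abcWord i j k
    · obtain ⟨i, j, k, rfl⟩ := habc
      have h : ¬IsCyclicTriple i j k := fun h => hw ⟨i, j, k, rfl, h⟩
      rw [count_abcGrammar_abcWord]
      unfold IsCyclicTriple at h
      split_ifs <;> omega
    · exact count_abcGrammar_of_forall_ne fun i j k h => habc ⟨i, j, k, h⟩

end Generates

section NotContextFree

theorem isCyclicTriple_count_of_mem_cyclicLanguage {w : List (Fin 3)} (hw : w ∈ cyclicLanguage) :
    IsCyclicTriple (w.count 0) (w.count 1) (w.count 2) := by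
  obtain ⟨i, j, k, rfl, h⟩ := hw
  rwa [count_abcWord, count_abcWord, count_abcWord]

theorem pairwise_le_of_mem_cyclicLanguage {w : List (Fin 3)} (hw : w ∈ cyclicLanguage) :
    w.Pairwise (· ≤ ·) := by
  obtain ⟨i, j, k, rfl, -⟩ := hw
  exact pairwise_le_abcWord i j k

theorem eq_of_pairwise_le_append_self {α : Type*} [PartialOrder α] {l : List α}
    (h : (l ++ l).Pairwise (· ≤ ·)) {a b : α} (ha : a ∈ l) (hb : b ∈ l) : a = b :=
  have hle := (List.pairwise_append.1 h).2.2
  le_antisymm (hle a ha b hb) (hle b hb a ha)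

theorem notMem_or_notMem_of_pairwise_le_append_self {α : Type*} [PartialOrder α] {x y : List α}
    (hx : (x ++ x).Pairwise (· ≤ ·)) (hy : (y ++ y).Pairwise (· ≤ ·)) {a b c : α}
    (hab : a ≠ b) (hac : a ≠ c) (hbc : b ≠ c) (hc : c ∈ x ++ y) : a ∉ x ++ y ∨ b ∉ x ++ y := by
  have hxeq (d e : α) (hd : d ∈ x) (he : e ∈ x) : d = e := eq_of_pairwise_le_append_self hx hd he
  have hyeq (d e : α) (hd : d ∈ y) (he : e ∈ y) : d = e := eq_of_pairwise_le_append_self hy hd he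
  grind

theorem count_pump {α : Type*} [DecidableEq α] (u x z y v : List α) (n : ℕ) (a : α) :
    (u ++ (List.replicate (n + 1) x).flatten ++ z ++ (List.replicate (n + 1) y).flatten ++ v).count
      a = (u ++ x ++ z ++ y ++ v).count a + n * (x ++ y).count a := by
  simp only [List.count_append, List.count_flatten, List.map_replicate, List.sum_replicate,
    smul_eq_mul]
  ring

open Nat in
/-- If `B = 0`, then `k` can be pumped up exactly to the original `i`, overtaking `j`; if
`A = 0 < B`, then `j` overtakes `i` while `k` is still small. -/
theorem exists_not_isCyclicTriple {N A B C : ℕ} (hC : 0 < C) (hCN : C ≤ N + 1)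
    (hAB : A = 0 ∨ B = 0) :
    ∃ t, ¬IsCyclicTriple (N + 1 + 2 * (N + 1)! + t * A) (N + 2 * (N + 1)! + t * B)
      (N + 1 + t * C) := by
  obtain rfl | hB := Nat.eq_zero_or_pos B
  · obtain ⟨t, ht⟩ : C ∣ 2 * (N + 1)! := (Nat.dvd_factorial hC hCN).mul_left 2
    refine ⟨t, ?_⟩
    rw [ht, mul_comm t C, IsCyclicTriple]
    omega
  · obtain rfl : A = 0 := hAB.resolve_right hB.ne'
    refine ⟨2, ?_⟩
    have : N + 1 ≤ (N + 1)! := Nat.self_le_factorial _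
    rw [IsCyclicTriple]
    omega

open Nat in
theorem not_isContextFree_cyclicLanguage : ¬cyclicLanguage.IsContextFree := by
  intro hcf
  obtain ⟨N, hN⟩ := exists_pumping_of_isContextFree hcf (· == 2)
  have hcount := count_abcWord (N + 1 + 2 * (N + 1)!) (N + 2 * (N + 1)!) (N + 1)
  have hfactorial : 0 < (N + 1)! := Nat.factorial_pos _
  obtain ⟨u, x, z, y, v, hw, hmark, hpump⟩ :=
    hN (abcWord (N + 1 + 2 * (N + 1)!) (N + 2 * (N + 1)!) (N + 1))
      ⟨_, _, _, rfl, .inl (by omega)⟩ ((Nat.le_succ N).trans (hcount 2).ge)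
  rw [hw] at hcount
  obtain ⟨hx, hy⟩ : (x ++ x).Pairwise (· ≤ ·) ∧ (y ++ y).Pairwise (· ≤ ·) := by
    obtain ⟨h, -, -⟩ := List.pairwise_append.1 (pairwise_le_of_mem_cyclicLanguage (hpump 2))
    obtain ⟨h, hy, -⟩ := List.pairwise_append.1 h
    obtain ⟨h, -, -⟩ := List.pairwise_append.1 h
    obtain ⟨-, hx, -⟩ := List.pairwise_append.1 h
    simpa [List.replicate_succ] using And.intro hx hy
  have hC : (x ++ y).count 2 ≤ N + 1 := by
    refine le_of_le_of_eq ?_ (hcount 2)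
    simp only [List.count_append]
    omega
  have hAB := notMem_or_notMem_of_pairwise_le_append_self hx hy
    (a := 0) (b := 1) (c := 2) (by decide) (by decide) (by decide) (List.count_pos_iff.1 hmark)
  obtain ⟨t, ht⟩ := exists_not_isCyclicTriple hmark hC
    (hAB.imp List.count_eq_zero.2 List.count_eq_zero.2)
  have hcyclic := isCyclicTriple_count_of_mem_cyclicLanguage (hpump (t + 1))
  rw [count_pump, count_pump, count_pump, hcount, hcount, hcount] at hcyclic
  exact ht hcyclic

end NotContextFree

end CyclicLanguage

/-- There is a language generated by an admissible signed grammar that is not context-free. -/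
theorem signed_grammar_generates_non_contextfree :
    ∃ (T : Type) (_ : Fintype T) (L : Language T) (G : SignedGrammar T),
      G.Generates L ∧ ¬ L.IsContextFree :=
  ⟨Fin 3, inferInstance, cyclicLanguage, abcGrammar, abcGrammar_generates_cyclicLanguage,
    not_isContextFree_cyclicLanguage⟩
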